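/- arXiv:2001.07437 — 2 statements merged into one kernel-verified Lean document; each statement's English description precedes it below -/
import Mathlib

section
/- Let s be the posterior scoring rule. Then there exists a threshold τ ∈ ℝ such that PxAcc(s, τ) = 1 if and only if for all cues m₁, m₀ with pM(m₁) > 0, pM(m₀) > 0, T(m₁) = true and T(m₀) = false, one has s(m₀) < s(m₁). (Discrete, tie-free form of the paper's ill-posedness Lemma: when the true posterior p(Y|M) is used as the scoring rule, perfect pixel-wise localization accuracy at some threshold is achievable exactly when every positive-probability foreground cue has strictly larger posterior than every positive-probability background cue, i.e. the foreground–background posterior ratio exceeds 1.) -/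
open Finset

/-- Marginal probability of a cue `m` under the joint pmf `p` on `M × Bool`. -/
noncomputable def pM {M : Type*} (p : M × Bool → ℝ) (m : M) : ℝ :=
  p (m, true) + p (m, false)

/-- Pixel-wise localization accuracy of scoring rule `s` at threshold `τ`. -/
noncomputable def pxAcc {M : Type*} [Fintype M] (p : M × Bool → ℝ) (T : M → Bool)
    (s : M → ℝ) (τ : ℝ) : ℝ :=
  ∑ m ∈ univ.filter (fun m => T m = true ∧ τ ≤ s m), pM p m
    + ∑ m ∈ univ.filter (fun m => T m = false ∧ s m < τ), pM p m

theorem pxAcc_eq_one_iff_aux {M : Type*} [Fintype M]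
    (p : M × Bool → ℝ) (hp : ∀ x, 0 ≤ p x) (hsum : ∑ x, p x = 1)
    (T : M → Bool) (s : M → ℝ) (τ : ℝ) :
    pxAcc p T s τ = 1 ↔ ∀ m, 0 < pM p m →
      ((T m = true → τ ≤ s m) ∧ (T m = false → s m < τ)) := by
  have h0 : ∀ m, 0 ≤ pM p m := fun m => add_nonneg (hp _) (hp _)
  have h1 : ∑ m, pM p m = 1 := by
    rw [← hsum, Fintype.sum_prod_type]
    simp [pM]
  have h2 : 1 - pxAcc p T s τ =
      ∑ m, (if (T m = true → τ ≤ s m) ∧ (T m = false → s m < τ) then 0 else pM p m) := by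
    rw [← h1, pxAcc, Finset.sum_filter, Finset.sum_filter, ← Finset.sum_add_distrib,
      ← Finset.sum_sub_distrib]
    refine Finset.sum_congr rfl fun m _ => ?_
    cases hT : T m
    · by_cases h : s m < τ <;> simp [h]
    · by_cases h : τ ≤ s m <;> simp [h]
  have h3 : pxAcc p T s τ = 1 ↔ 1 - pxAcc p T s τ = 0 := by
    constructor <;> intro h <;> linarith
  rw [h3, h2, Finset.sum_eq_zero_iff_of_nonneg]
  · refine forall_congr' fun m => ?_
    constructor
    · intro h hm
      by_contra hc
      have := h (Finset.mem_univ m)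
      rw [if_neg hc] at this
      linarith
    · intro h _
      split_ifs with hc
      · rfl
      · exact le_antisymm (not_lt.mp fun hm => hc (h hm)) (h0 m)
  · intro m _
    split_ifs
    · exact le_rfl
    · exact h0 m

/-- Ill-posedness lemma (discrete, tie-free form): with the posterior scoring rule,
perfect pixel-wise accuracy at some threshold is achievable iff every
positive-probability foreground cue strictly out-scores every positive-probability
background cue. -/
theorem posterior_perfect_accuracy_iff {M : Type*} [Fintype M] [Nonempty M]
    (p : M × Bool → ℝ) (hp : ∀ x, 0 ≤ p x) (hsum : ∑ x, p x = 1)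
    (T : M → Bool) (s : M → ℝ)
    (hs : ∀ m, s m = if 0 < pM p m then p (m, true) / pM p m else 0) :
    (∃ τ : ℝ, pxAcc p T s τ = 1) ↔
      ∀ m₁ m₀ : M, 0 < pM p m₁ → 0 < pM p m₀ → T m₁ = true → T m₀ = false →
        s m₀ < s m₁ := by
  simp only [pxAcc_eq_one_iff_aux p hp hsum T s]
  constructor
  · rintro ⟨τ, h⟩ m₁ m₀ h₁ h₀ t₁ t₀
    exact lt_of_lt_of_le ((h m₀ h₀).2 t₀) ((h m₁ h₁).1 t₁)
  · intro h
    by_cases hF : (univ.filter (fun m => T m = true ∧ 0 < pM p m)).Nonempty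
    · obtain ⟨a, ha, hmin⟩ := Finset.exists_min_image _ s hF
      simp only [Finset.mem_filter, Finset.mem_univ, true_and] at ha hmin
      exact ⟨s a, fun m hm => ⟨fun t => hmin m ⟨t, hm⟩, fun t => h a m ha.2 hm ha.1 t⟩⟩
    · obtain ⟨b, hb⟩ := Finite.exists_max s
      refine ⟨s b + 1, fun m hm => ⟨fun t => ?_, fun _ => by linarith [hb m]⟩⟩
      exact absurd ⟨m, by simp [t, hm]⟩ hF
end

section
/- ('If' direction of the ill-posedness Lemma, for an arbitrary scoring function.) Let s : 𝓜 → ℝ be any scoring function. If for all cues m₁, m₀ with pM(m₁) > 0, pM(m₀) > 0, T(m₁) = true and T(m₀) = false one has s(m₀) < s(m₁), then there exists a threshold τ ∈ ℝ with PxAcc(s, τ) = 1. -/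
open Finset

/-- 'If' direction of the ill-posedness lemma for an arbitrary scoring function:
strict separation of positive-probability foreground cues from background cues
implies perfect pixel-wise accuracy at some threshold. -/
theorem perfect_accuracy_of_separation {M : Type*} [Fintype M] [Nonempty M]
    (p : M × Bool → ℝ) (hp : ∀ x, 0 ≤ p x) (hsum : ∑ x, p x = 1)
    (T : M → Bool) (s : M → ℝ)
    (hsep : ∀ m₁ m₀ : M, 0 < pM p m₁ → 0 < pM p m₀ → T m₁ = true → T m₀ = false →
      s m₀ < s m₁) :
    ∃ τ : ℝ, pxAcc p T s τ = 1 := by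
  have hnn : ∀ m, 0 ≤ pM p m := fun m => add_nonneg (hp _) (hp _)
  have htot : ∑ m, pM p m = 1 := by
    rw [← hsum, Fintype.sum_prod_type]
    simp [pM]
  have key : ∃ τ : ℝ, (∀ m, 0 < pM p m → T m = true → τ ≤ s m) ∧
      (∀ m, 0 < pM p m → T m = false → s m < τ) := by
    by_cases h : (univ.filter (fun m => 0 < pM p m ∧ T m = true)).Nonempty
    · obtain ⟨m₁, hm₁, hmin⟩ := exists_min_image _ s h
      rw [mem_filter] at hm₁
      refine ⟨s m₁, fun m h1 h2 => hmin m ?_, fun m h1 h2 => ?_⟩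
      · exact mem_filter.2 ⟨mem_univ _, h1, h2⟩
      · exact hsep m₁ m hm₁.2.1 h1 hm₁.2.2 h2
    · obtain ⟨m₀, -, hmax⟩ := exists_max_image univ s univ_nonempty
      refine ⟨s m₀ + 1, fun m h1 h2 => ?_, fun m _ _ => ?_⟩
      · exact absurd ⟨m, mem_filter.2 ⟨mem_univ _, h1, h2⟩⟩ h
      · linarith [hmax m (mem_univ _)]
  obtain ⟨τ, h1, h0⟩ := key
  refine ⟨τ, ?_⟩
  rw [← htot, pxAcc, sum_filter, sum_filter, ← sum_add_distrib]
  refine sum_congr rfl fun m _ => ?_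
  rcases (hnn m).eq_or_lt with h | h
  · simp [← h]
  · cases hT : T m
    · simp [h0 m h hT]
    · simp [h1 m h hT]
end
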